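/- There exist constants c > 0 and K ≥ 0 such that the following holds. Let n, m, u be positive integers and let ε be a real with 0 < ε ≤ 1/2 and u ≥ c·(n²/ε + m²). Let U be a finite set with |U| = u, let G be a finite nonempty set of functions from U to Bool, and suppose that to every ordered pair (Y, N) of disjoint subsets of U with |Y| = n and |N| = m there is assigned a probability distribution μ_{Y,N} on G such that: (i) every g in the support of μ_{Y,N} satisfies g(y) = true for all y ∈ Y and g(z) = false for all z ∈ N, and (ii) for every x ∈ U with x ∉ Y ∪ N, the probability under g ~ μ_{Y,N} that g(x) = true is at most ε. Then log₂|G| ≥ n·log₂(max{1/ε, m/n}) + log₂(e)·min{ε·m, n} − K. -/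

import Mathlib

open ENNReal

/-!
Counting in exponential form. Draw a pair `(Y, N)` uniformly, then an instance `g` from the
distribution assigned to it, and let `w g` be the probability that `g` results. Since `g` can only
arise from pairs it is compatible with, `w g` is at most the fraction of such pairs, which for an
instance with a fraction `p` of positive answers is about `p ^ n (1 - p) ^ m ≤ exp (-f p)`, where
`f p = n log (1/p) + m p`. The function `f` is convex with its minimum at `n / m`; with
`t = min ε (n/m)` the claimed bound is `f t / log 2` up to a constant. Replacing `f` by its tangent
line at `t`, which has slope `m - n/t ≤ 0`, gives `w g * exp (L g) ≤ 1` for an affine function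
`L g` of `p` (`exp_mul_choose_le`). Jensen's inequality for `exp` then yields
`exp (∑ w g * L g) ≤ ∑ w g * exp (L g) ≤ |G|`, and the false-positive condition bounds the mean of
`p` by `ε + n/u`, so that `∑ w g * L g ≥ f t - 2` (`log_card_ge`). The assumption
`u ≥ n²/ε + m²` keeps both error terms, `n²/(ε u)` and `2 n m / u`, at most `1`.
-/

lemma descFactorial_mul_pow_le {a u : ℕ} (h : a ≤ u) (n : ℕ) :
    a.descFactorial n * u ^ n ≤ u.descFactorial n * a ^ n := by
  induction n with
  | zero => simp
  | succ k ih =>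
    have h1 : (a - k) * u ≤ (u - k) * a := by
      rw [Nat.sub_mul, Nat.sub_mul, mul_comm u a]
      exact Nat.sub_le_sub_left (Nat.mul_le_mul_left k h) _
    calc a.descFactorial (k + 1) * u ^ (k + 1)
        = ((a - k) * u) * (a.descFactorial k * u ^ k) := by
          rw [Nat.descFactorial_succ]; ring
      _ ≤ ((u - k) * a) * (u.descFactorial k * a ^ k) := Nat.mul_le_mul h1 ih
      _ = u.descFactorial (k + 1) * a ^ (k + 1) := by
          rw [Nat.descFactorial_succ]; ring

lemma choose_le_mul_div_pow {a u : ℕ} (h : a ≤ u) (hu : 0 < u) (n : ℕ) :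
    (a.choose n : ℝ) ≤ u.choose n * ((a : ℝ) / u) ^ n := by
  have h1 := descFactorial_mul_pow_le h n
  rw [Nat.descFactorial_eq_factorial_mul_choose, Nat.descFactorial_eq_factorial_mul_choose,
    mul_assoc, mul_assoc] at h1
  have h2 : (a.choose n : ℝ) * u ^ n ≤ u.choose n * a ^ n := by
    exact_mod_cast Nat.le_of_mul_le_mul_left h1 n.factorial_pos
  have hu' : (0 : ℝ) < u := by exact_mod_cast hu
  rw [div_pow, ← mul_div_assoc, le_div_iff₀ (by positivity)]
  exact h2

/-- The tangent line at `t` to `p ↦ n log (1/p) + m p`, shifted down by `1`, is at most the negative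
log of the fraction of pairs `(Y, N)` compatible with an instance having `a` positives (so
`p = a / u`). The shift pays for `N` being drawn from `u - n` rather than `u` elements. -/
lemma exp_mul_choose_le {n m u a b : ℕ} {t : ℝ} (ht : 0 < t) (hun : 2 * n ≤ u)
    (hu : 0 < u) (hn : 0 < n) (hnm : n ^ 2 + m ^ 2 ≤ u) (hab : a + b = u) (han : n ≤ a) :
    Real.exp (-(n * Real.log t) + m * t + (m - n / t) * ((a : ℝ) / u - t) - 1)
      * (a.choose n * b.choose m) ≤ u.choose n * (u - n).choose m := by
  have hu' : (0 : ℝ) < u := by exact_mod_cast hu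
  have hun0 : 0 < u - n := by omega
  have hcast : ((u - n : ℕ) : ℝ) = (u : ℝ) - n := by
    rw [Nat.cast_sub (by omega)]
  have hunR : 2 * (n : ℝ) ≤ u := by exact_mod_cast hun
  have hn' : (0 : ℝ) < n := by exact_mod_cast hn
  have hpos : (0 : ℝ) < (u : ℝ) - n := by linarith
  have hbR : (b : ℝ) = u - a := by
    rw [← hab]; push_cast; ring
  have h1 := choose_le_mul_div_pow (a := a) (u := u) (by omega) hu n
  have h2 := choose_le_mul_div_pow (a := b) (u := u - n) (by omega) hun0 m
  rw [hcast] at h2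
  set p : ℝ := (a : ℝ) / u with hp
  have hp0 : 0 ≤ p := by positivity
  have h3 : p ≤ Real.exp (p / t - 1 + Real.log t) := by
    rw [Real.exp_add, Real.exp_log ht]
    have := Real.add_one_le_exp (p / t - 1)
    calc p = (p / t - 1 + 1) * t := by field_simp; ring
      _ ≤ _ := by gcongr
  have h4 : (b : ℝ) / (u - n) ≤ Real.exp (-p + 2 * n / u) := by
    rw [Real.exp_add]
    have e1 := Real.add_one_le_exp (-p)
    have e2 := Real.add_one_le_exp (2 * n / u : ℝ)
    have e3 : (u : ℝ) / (u - n) ≤ Real.exp (2 * n / u) := by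
      refine le_trans ?_ e2
      rw [div_le_iff₀ hpos]
      have : (2 * (n : ℝ) / u + 1) * (u - n) = u + n * (u - 2 * n) / u := by
        field_simp; ring
      rw [this]
      have : 0 ≤ (n : ℝ) * (u - 2 * n) / u := by
        apply div_nonneg (mul_nonneg hn'.le (by linarith)) hu'.le
      linarith
    calc (b : ℝ) / (u - n) = (-p + 1) * (u / (u - n)) := by
          rw [hbR, hp]; field_simp; ring
      _ ≤ Real.exp (-p) * Real.exp (2 * n / u) := by
          apply mul_le_mul e1 e3 (by positivity) (Real.exp_pos _).le
  have h5 : p ^ n ≤ Real.exp (n * (p / t - 1 + Real.log t)) := by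
    rw [Real.exp_nat_mul]; gcongr
  have h6 : ((b : ℝ) / (u - n)) ^ m ≤ Real.exp (m * (-p + 2 * n / u)) := by
    rw [Real.exp_nat_mul]; gcongr
  have h7 : (m : ℝ) * (2 * n / u) ≤ 1 := by
    rw [mul_div_assoc', div_le_one hu']
    have : (n : ℝ) ^ 2 + m ^ 2 ≤ u := by exact_mod_cast hnm
    nlinarith [sq_nonneg ((n : ℝ) - m)]
  calc _ ≤ Real.exp (-(n * Real.log t) + m * t + (m - n / t) * (p - t) - 1)
          * ((u.choose n * Real.exp (n * (p / t - 1 + Real.log t)))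
            * ((u - n).choose m * Real.exp (m * (-p + 2 * n / u)))) := by
        gcongr
        · exact h1.trans (by gcongr)
        · exact h2.trans (by gcongr)
    _ = (u.choose n * (u - n).choose m) * Real.exp (m * (2 * n / u) - 1) := by
        rw [show (m * (2 * n / u) - 1 : ℝ) =
          (-(n * Real.log t) + m * t + (m - n / t) * (p - t) - 1)
          + (n * (p / t - 1 + Real.log t)) + (m * (-p + 2 * n / u)) by field_simp; ring,
          Real.exp_add, Real.exp_add]
        ring
    _ ≤ (u.choose n * (u - n).choose m) * 1 := by
        gcongr
        rw [Real.exp_le_one_iff]; linarith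
    _ = _ := mul_one _

open Finset in
/-- All pairs `(Y, N)` of disjoint subsets with `|Y| = n` and `|N| = m`. -/
def listPairs (α : Type) [Fintype α] [DecidableEq α] (n m : ℕ) :
    Finset (Σ _ : Finset α, Finset α) :=
  (powersetCard n univ).sigma fun Y => powersetCard m Yᶜ

open Finset in
lemma card_listPairs (α : Type) [Fintype α] [DecidableEq α] (n m : ℕ) :
    (listPairs α n m).card
      = (Fintype.card α).choose n * (Fintype.card α - n).choose m := by
  rw [listPairs, card_sigma, sum_const_nat (m := (Fintype.card α - n).choose m)]
  · simp
  · intro Y hY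
    rw [card_powersetCard, card_compl, (mem_powersetCard.1 hY).2]

open Finset in
lemma mem_listPairs {α : Type} [Fintype α] [DecidableEq α] {n m : ℕ}
    {q : Σ _ : Finset α, Finset α} :
    q ∈ listPairs α n m ↔ Disjoint q.1 q.2 ∧ q.1.card = n ∧ q.2.card = m := by
  simp only [listPairs, mem_sigma, mem_powersetCard, subset_univ, true_and,
    le_compl_iff_disjoint_left]
  tauto

open Finset in
/-- The space bound in natural logarithms, with `t` either `ε` (if that is at most
`n / m`) or `n / m`, the minimizer of `n log (1/p) + m p`, and `ν q` the weights of the distribution assigned to the pair `q`. -/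
lemma log_card_ge {α : Type} [Fintype α] [DecidableEq α] {n m u : ℕ} {t ε : ℝ}
    (ht : 0 < t) (hε : 0 < ε) (hun : 2 * n ≤ u) (hu : 0 < u) (hn : 0 < n)
    (hnm : n ^ 2 + m ^ 2 ≤ u) (hnmu : n + m ≤ u) (hcard : Fintype.card α = u)
    (hnε : (n : ℝ) ^ 2 / ε ≤ u)
    (htε : (t = ε ∧ (m : ℝ) ≤ n / t) ∨ (m : ℝ) = n / t)
    (G : Finset (α → Bool)) (ν : (Σ _ : Finset α, Finset α) → (α → Bool) → ℝ)
    (hν0 : ∀ q g, 0 ≤ ν q g)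
    (hν1 : ∀ q ∈ listPairs α n m, ∑ g ∈ G, ν q g = 1)
    (hνc : ∀ q ∈ listPairs α n m, ∀ g, ν q g ≠ 0 →
      (∀ y ∈ q.1, g y = true) ∧ ∀ z ∈ q.2, g z = false)
    (hνε : ∀ q ∈ listPairs α n m, ∀ x, x ∉ q.1 → x ∉ q.2 →
      ∑ g ∈ G, (if g x = true then ν q g else 0) ≤ ε) :
    -(n * Real.log t) + m * t - 2 ≤ Real.log G.card := by
  set P := listPairs α n m with hPdef
  set M : ℝ := (P.card : ℝ) with hM
  have hMeq : M = u.choose n * (u - n).choose m := by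
    rw [hM, hPdef, card_listPairs, hcard]; push_cast; rfl
  have hMpos : 0 < M := by
    rw [hMeq]
    have h1 : 0 < u.choose n := Nat.choose_pos (by omega)
    have h2 : 0 < (u - n).choose m := Nat.choose_pos (by omega)
    positivity
  have hu' : (0 : ℝ) < u := by exact_mod_cast hu
  let pos : (α → Bool) → Finset α := fun g => univ.filter fun x => g x = true
  let w : (α → Bool) → ℝ := fun g => (∑ q ∈ P, ν q g) / M
  let L : (α → Bool) → ℝ := fun g =>
    -(n * Real.log t) + m * t + (m - n / t) * (((pos g).card : ℝ) / u - t) - 1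
  have hw0 : ∀ g, 0 ≤ w g := fun g => div_nonneg (sum_nonneg fun q _ => hν0 q g) hMpos.le
  have hw1 : ∑ g ∈ G, w g = 1 := by
    simp only [w]
    rw [← sum_div, sum_comm, sum_congr rfl hν1]
    simp [← hM, hMpos.ne']
  have hν_le : ∀ q ∈ P, ∀ g ∈ G, ν q g ≤ 1 := by
    intro q hq g hg
    rw [← hν1 q hq]
    exact single_le_sum (f := ν q) (fun i _ => hν0 q i) hg
  have hwL : ∀ g ∈ G, w g * Real.exp (L g) ≤ 1 := by
    intro g hg
    by_cases hz : ∀ q ∈ P, ν q g = 0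
    · have : w g = 0 := by simp only [w]; rw [sum_eq_zero hz, zero_div]
      rw [this]; norm_num
    push Not at hz
    obtain ⟨q₀, hq₀, hνq₀⟩ := hz
    have hc₀ := hνc q₀ hq₀ g hνq₀
    have han : n ≤ (pos g).card := by
      rw [← (mem_listPairs.1 hq₀).2.1]
      exact card_le_card fun y hy => by simp [pos, hc₀.1 y hy]
    have hab : (pos g).card + (pos g)ᶜ.card = u := by
      rw [card_add_card_compl, hcard]
    have hle : ∑ q ∈ P, ν q g ≤ ((pos g).card.choose n * (pos g)ᶜ.card.choose m : ℝ) := by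
      -- only compatible pairs contribute, each at most `1`
      have hsub : P.filter (fun q => ν q g ≠ 0) ⊆
          (powersetCard n (pos g)).sigma fun _ => powersetCard m (pos g)ᶜ := by
        intro q hq
        rw [mem_filter] at hq
        have h1 := mem_listPairs.1 hq.1
        have h2 := hνc q hq.1 g hq.2
        simp only [mem_sigma, mem_powersetCard]
        refine ⟨⟨fun y hy => ?_, h1.2.1⟩, fun z hz => ?_, h1.2.2⟩
        · simp [pos, h2.1 y hy]
        · simp [pos, h2.2 z hz]
      calc ∑ q ∈ P, ν q g = ∑ q ∈ P.filter (fun q => ν q g ≠ 0), ν q g :=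
            (sum_filter_ne_zero P).symm
        _ ≤ ∑ q ∈ P.filter (fun q => ν q g ≠ 0), (1 : ℝ) :=
            sum_le_sum fun q hq => hν_le q (mem_filter.1 hq).1 g hg
        _ = ((P.filter (fun q => ν q g ≠ 0)).card : ℝ) := by simp
        _ ≤ (((powersetCard n (pos g)).sigma fun _ => powersetCard m (pos g)ᶜ).card : ℝ) := by
            exact_mod_cast card_le_card hsub
        _ = _ := by simp [card_sigma]
    have hmain := exp_mul_choose_le (m := m) ht hun hu hn hnm hab han
    rw [← hMeq] at hmain
    simp only [w]
    rw [div_mul_eq_mul_div, div_le_one hMpos, mul_comm]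
    exact le_trans (by gcongr) hmain
  have hJ : Real.exp (∑ g ∈ G, w g * L g) ≤ G.card := by
    have := convexOn_exp.map_sum_le (t := G) (w := w) (p := L) (fun g _ => hw0 g) hw1
      (fun _ _ => Set.mem_univ _)
    simp only [smul_eq_mul] at this
    refine this.trans ((sum_le_sum hwL).trans ?_)
    simp
  have hlog : ∑ g ∈ G, w g * L g ≤ Real.log G.card := by
    rw [Real.le_log_iff_exp_le]
    · exact hJ
    · exact (Real.exp_pos _).trans_le hJ
  have hq_pos : ∀ q ∈ P, ∑ g ∈ G, ν q g * (pos g).card ≤ n + ε * u := by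
    intro q hq
    have h1 := mem_listPairs.1 hq
    calc ∑ g ∈ G, ν q g * (pos g).card
        = ∑ x : α, ∑ g ∈ G, (if g x = true then ν q g else 0) := by
          rw [sum_comm]
          refine sum_congr rfl fun g _ => ?_
          rw [← sum_filter, sum_const, nsmul_eq_mul, mul_comm]
      _ ≤ ∑ x : α, ((if x ∈ q.1 then 1 else 0) + ε) := by
          refine sum_le_sum fun x _ => ?_
          by_cases hx : x ∈ q.1
          · rw [if_pos hx]
            refine le_trans ?_ (le_add_of_nonneg_right hε.le)
            rw [← hν1 q hq]
            refine sum_le_sum fun g _ => ?_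
            split_ifs
            · exact le_rfl
            · exact hν0 q g
          · rw [if_neg hx, zero_add]
            by_cases hx2 : x ∈ q.2
            · refine le_trans (le_of_eq (sum_eq_zero fun g _ => ?_)) hε.le
              by_contra hne
              have hg : g x = true := by
                by_contra h; exact hne (if_neg h)
              rw [if_pos hg] at hne
              have := (hνc q hq g hne).2 x hx2
              simp [hg] at this
            · exact hνε q hq x hx hx2
      _ = n + ε * u := by
          rw [sum_add_distrib, sum_const, card_univ, hcard, nsmul_eq_mul, mul_comm (u : ℝ)]
          simp [h1.2.1]
  have hmean : ∑ g ∈ G, w g * (((pos g).card : ℝ) / u) ≤ ε + n / u := by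
    have e : ∑ g ∈ G, w g * (((pos g).card : ℝ) / u)
        = (∑ q ∈ P, ∑ g ∈ G, ν q g * (pos g).card) / (M * u) := by
      rw [sum_comm, sum_div]
      refine sum_congr rfl fun g _ => ?_
      simp only [w]
      rw [← sum_mul]; field_simp
    rw [e, div_le_iff₀ (by positivity)]
    refine (sum_le_sum hq_pos).trans (le_of_eq ?_)
    rw [sum_const, nsmul_eq_mul, ← hM]
    field_simp; ring
  have hexp : ∑ g ∈ G, w g * L g = -(n * Real.log t) + m * t - 1
      + (m - n / t) * (∑ g ∈ G, w g * (((pos g).card : ℝ) / u) - t) := by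
    have : ∀ g ∈ G, w g * L g = w g * (-(n * Real.log t) + m * t - 1 - (m - n / t) * t)
        + (m - n / t) * (w g * (((pos g).card : ℝ) / u)) := fun g _ => by
      simp only [L]; ring
    rw [sum_congr rfl this, sum_add_distrib, ← sum_mul, hw1, ← mul_sum]
    ring
  have hslope : -1 ≤ ((m : ℝ) - n / t)
      * (∑ g ∈ G, w g * (((pos g).card : ℝ) / u) - t) := by
    rcases htε with ⟨rfl, hm⟩ | hm
    · have h1 : ∑ g ∈ G, w g * (((pos g).card : ℝ) / u) - t ≤ n / u := by linarith
      have h2 : ((m : ℝ) - n / t) * (n / u) ≤ ((m : ℝ) - n / t)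
          * (∑ g ∈ G, w g * (((pos g).card : ℝ) / u) - t) :=
        mul_le_mul_of_nonpos_left h1 (by linarith)
      refine le_trans ?_ h2
      have h3 : (n : ℝ) / t * (n / u) ≤ 1 := by
        have : (n : ℝ) / t * (n / u) = (n ^ 2 / t) / u := by field_simp
        rw [this, div_le_one hu']; exact hnε
      have h4 : 0 ≤ (m : ℝ) * (n / u) := by positivity
      linarith [sub_mul (m : ℝ) (n / t) (n / u)]
    · rw [hm]; simp
  linarith

/-- There are constants `c > 0` and `K ≥ 0` such that any static yes/no filter
over a universe of size `u ≥ c(n²/ε + m²)` for yes-lists of size `n`, no-lists of size `m`, and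
false-positive rate `ε ≤ 1/2`, whose deterministic instances form a finite set `G` of functions
`U → Bool`, satisfies `log₂|G| ≥ n·log₂(max{1/ε, m/n}) + log₂(e)·min{ε·m, n} − K`
(with `log₂ e = 1/ln 2`). -/
theorem yes_no_filter_space_lower_bound :
    ∃ c : ℝ, 0 < c ∧ ∃ K : ℝ, 0 ≤ K ∧
      ∀ (n m u : ℕ), 0 < n → 0 < m → 0 < u →
      ∀ ε : ℝ, 0 < ε → ε ≤ 1 / 2 →
      c * ((n : ℝ) ^ 2 / ε + (m : ℝ) ^ 2) ≤ (u : ℝ) →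
      ∀ (α : Type) [Fintype α], Fintype.card α = u →
      ∀ (G : Finset (α → Bool)), G.Nonempty →
      ∀ (D : ∀ (Y N : Finset α), Disjoint Y N → Y.card = n → N.card = m → PMF (α → Bool)),
      (∀ (Y N : Finset α) (hd : Disjoint Y N) (hY : Y.card = n) (hN : N.card = m),
        ∀ g ∈ (D Y N hd hY hN).support,
          g ∈ G ∧ (∀ y ∈ Y, g y = true) ∧ (∀ z ∈ N, g z = false)) →
      (∀ (Y N : Finset α) (hd : Disjoint Y N) (hY : Y.card = n) (hN : N.card = m),
        ∀ x : α, x ∉ Y → x ∉ N →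
          (D Y N hd hY hN).toOuterMeasure {g | g x = true} ≤ ENNReal.ofReal ε) →
      Real.logb 2 (G.card)
        ≥ (n : ℝ) * Real.logb 2 (max (1 / ε) ((m : ℝ) / n))
            + (Real.log 2)⁻¹ * min (ε * m) (n : ℝ) - K := by
  refine ⟨1, one_pos, 2 / Real.log 2, by positivity, ?_⟩
  intro n m u hn hm hu ε hε hε2 hc α _ hcard G hG D hD1 hD2
  classical
  have hn' : (1 : ℝ) ≤ n := by exact_mod_cast hn
  have hm' : (1 : ℝ) ≤ m := by exact_mod_cast hm
  have hnn : 2 * (n : ℝ) ^ 2 ≤ n ^ 2 / ε := by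
    rw [le_div_iff₀ hε]; nlinarith [sq_nonneg (n : ℝ)]
  rw [one_mul] at hc
  have hun : 2 * n ≤ u := by
    have : 2 * (n : ℝ) ≤ u := by nlinarith
    exact_mod_cast this
  have hnm : n ^ 2 + m ^ 2 ≤ u := by
    have : (n : ℝ) ^ 2 + m ^ 2 ≤ u := by nlinarith
    exact_mod_cast this
  have hnmu : n + m ≤ u := by nlinarith
  have hnε : (n : ℝ) ^ 2 / ε ≤ u := by nlinarith
  have hsum : ∀ (p : PMF (α → Bool)) (s : Finset (α → Bool)),
      ∑ g ∈ s, (p g).toReal = (∑ g ∈ s, p g).toReal := fun p s =>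
    (ENNReal.toReal_sum fun g _ => p.apply_ne_top g).symm
  let ν : (Σ _ : Finset α, Finset α) → (α → Bool) → ℝ := fun q g =>
    if h : Disjoint q.1 q.2 ∧ q.1.card = n ∧ q.2.card = m then
      (D q.1 q.2 h.1 h.2.1 h.2.2 g).toReal else 0
  have hν : ∀ q (h : Disjoint q.1 q.2 ∧ q.1.card = n ∧ q.2.card = m) g,
      ν q g = (D q.1 q.2 h.1 h.2.1 h.2.2 g).toReal := fun q h g => dif_pos h
  have key : ∀ t : ℝ, 0 < t → ((t = ε ∧ (m : ℝ) ≤ n / t) ∨ (m : ℝ) = n / t) →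
      -(n * Real.log t) + m * t - 2 ≤ Real.log G.card := by
    intro t ht htε
    refine log_card_ge ht hε hun hu hn hnm hnmu hcard hnε htε G ν ?_ ?_ ?_ ?_
    · intro q g
      simp only [ν]
      split_ifs
      · exact ENNReal.toReal_nonneg
      · exact le_rfl
    · intro q hq
      have h := mem_listPairs.1 hq
      simp only [hν q h]
      rw [hsum, ← tsum_eq_sum (L := .unconditional _), PMF.tsum_coe, ENNReal.toReal_one]
      intro g hg
      by_contra hne
      exact hg (hD1 _ _ h.1 h.2.1 h.2.2 g ((PMF.mem_support_iff _ _).2 hne)).1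
    · intro q hq g hne
      have h := mem_listPairs.1 hq
      rw [hν q h] at hne
      refine (hD1 _ _ h.1 h.2.1 h.2.2 g ((PMF.mem_support_iff _ _).2 fun h0 => hne ?_)).2
      rw [h0, ENNReal.toReal_zero]
    · intro q hq x hx1 hx2
      have h := mem_listPairs.1 hq
      simp only [hν q h]
      rw [← Finset.sum_filter, hsum]
      refine ENNReal.toReal_le_of_le_ofReal hε.le ?_
      refine le_trans ?_ (hD2 _ _ h.1 h.2.1 h.2.2 x hx1 hx2)
      rw [← PMF.toOuterMeasure_apply_finset]
      refine MeasureTheory.measure_mono fun g hg => ?_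
      simpa using (Finset.mem_filter.1 (Finset.mem_coe.1 hg)).2
  have hl2 : 0 < Real.log 2 := Real.log_pos one_lt_two
  -- `1/t` is the maximum and `m t` the minimum in the claim, for `t = min ε (n/m)`
  have fin : ∀ t : ℝ, 0 < t → max (1 / ε) ((m : ℝ) / n) = 1 / t →
      min (ε * m) (n : ℝ) = m * t →
      -(n * Real.log t) + m * t - 2 ≤ Real.log G.card →
      Real.logb 2 (G.card) ≥ (n : ℝ) * Real.logb 2 (max (1 / ε) ((m : ℝ) / n))
        + (Real.log 2)⁻¹ * min (ε * m) (n : ℝ) - 2 / Real.log 2 := by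
    intro t ht h1 h2 h3
    rw [h1, h2, Real.logb, Real.logb, one_div, Real.log_inv]
    calc _ = (-(n * Real.log t) + m * t - 2) / Real.log 2 := by field_simp
      _ ≤ _ := by gcongr
  rcases le_total (ε * m) n with h | h
  · have hmt : (m : ℝ) ≤ n / ε := by rw [le_div_iff₀ hε]; linarith
    refine fin ε hε (max_eq_left ?_) (by rw [min_eq_left h, mul_comm]) (key ε hε (Or.inl ⟨rfl, hmt⟩))
    rw [div_le_div_iff₀ (by linarith) hε]; linarith
  · have ht : (0 : ℝ) < n / m := by positivity
    refine fin (n / m) ht ?_ ?_ (key _ ht (Or.inr ?_))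
    · rw [one_div_div, max_eq_right]
      rw [div_le_div_iff₀ hε (by linarith)]; linarith
    · rw [min_eq_right h]; field_simp
    · field_simp
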